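/- Let X be a connected graph and suppose to each pair of vertices a,b there is associated a connected subgraph A(a,b) containing a and b. Suppose there exists D>0 such that (i) if a and b are joined by an edge then A(a,b) has diameter at most D, and (ii) for all vertices a,b,c, the subgraph A(a,b) is contained in the D-neighborhood of A(a,c) ∪ A(c,b). Then X is Gromov hyperbolic, with hyperbolicity constant depending only on D. -/

import Mathlib

/-- Gromov hyperbolicity of a connected graph with its path metric, expressed by the
four-point condition (equivalent, up to a universal change of constant, to all geodesic
triangles being thin). -/
def GromovHyperbolicGraph {V : Type*} (G : SimpleGraph V) (δ : ℝ) : Prop :=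
  0 ≤ δ ∧ ∀ x y z w : V,
    (G.dist x z : ℝ) + (G.dist y w : ℝ) ≤
      max ((G.dist x y : ℝ) + (G.dist z w : ℝ)) ((G.dist x w : ℝ) + (G.dist y z : ℝ)) + δ

/-!
Bowditch's guessing geodesics argument. Bisecting a geodesic from `a` to `b` repeatedly shows that
`A a b` lies within `O(log (dist a b))` of the geodesics from `a` to `b`. To remove the logarithm,
let `z ∈ A a b` be at distance `t` from its nearest point `p` on such geodesics, and cut a geodesic
through `p` at distance `3 * t` on both sides of `p`. Then `z` is `2 * N`-close to the set of one of
the three pieces: for the outer pieces, which are far from `p`, this contradicts induction on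
`dist a b`, and for the middle piece of length at most `6 * t` the logarithmic bound gives
`t ≤ O(log t)`.
Once every `A a b` is close to geodesics, connectedness of `A x z` yields a point close to both
`A x w` and `A w z`; this point is also close to `A x y` or `A y z`, and either case gives one
alternative of the four-point condition.
-/

theorem sq_add_five_le_two_pow {k : ℕ} (hk : 8 ≤ k) : (k + 5) ^ 2 ≤ 2 ^ k := by
  induction k, hk using Nat.le_induction with
  | base => norm_num
  | succ k _ ih => rw [pow_succ 2]; nlinarith

theorem mul_clog_add_four_lt {N t : ℕ} (ht : 6 * N * (N + 2) < t) :
    N * (Nat.clog 2 (6 * t) + 4) < t := by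
  obtain ⟨k, hk⟩ : ∃ k, Nat.clog 2 (6 * t) = k + 1 :=
    Nat.exists_eq_succ_of_ne_zero (Nat.clog_pos one_lt_two (by lia)).ne'
  have hpow : 2 ^ k < 6 * t := Nat.pow_lt_of_lt_clog (b := 2) (by lia)
  rw [hk]
  by_cases hk8 : k < 8
  · calc N * (k + 1 + 4) ≤ N * 12 := by gcongr; lia
      _ ≤ 6 * N * (N + 2) := by nlinarith
      _ < t := ht
  by_cases hkN : k + 5 ≤ 6 * N
  · calc N * (k + 1 + 4) ≤ N * (6 * N) := by gcongr
      _ ≤ 6 * N * (N + 2) := by nlinarith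
      _ < t := ht
  · have : 6 * (N * (k + 1 + 4)) < 6 * t :=
      calc 6 * (N * (k + 1 + 4)) = 6 * N * (k + 5) := by ring
        _ ≤ (k + 5) * (k + 5) := by gcongr; lia
        _ ≤ 2 ^ k := by rw [← sq]; exact sq_add_five_le_two_pow (not_lt.1 hk8)
        _ < 6 * t := hpow
    lia

section Metric

variable {V : Type*} {G : SimpleGraph V} {a b c p x y z : V} {r s : ℕ} {S T : Set V}

/-- The union of the vertex sets of all geodesics from `a` to `b`. It stands in for a choice of
geodesic in the thin triangle arguments. -/
def geodesicInterval (G : SimpleGraph V) (a b : V) : Set V :=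
  {p | G.dist a p + G.dist p b = G.dist a b}

/-- The closed `r`-neighborhood of a set of vertices, for the path metric. The distance is `0`
between different components, so this is meaningful only in a connected graph. -/
def distThickening (G : SimpleGraph V) (r : ℕ) (S : Set V) : Set V :=
  {x | ∃ y ∈ S, G.dist x y ≤ r}

theorem mem_geodesicInterval :
    p ∈ geodesicInterval G a b ↔ G.dist a p + G.dist p b = G.dist a b :=
  .rfl

theorem mem_distThickening : x ∈ distThickening G r S ↔ ∃ y ∈ S, G.dist x y ≤ r :=
  .rfl

theorem left_mem_geodesicInterval : a ∈ geodesicInterval G a b := by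
  simp [mem_geodesicInterval]

theorem geodesicInterval_comm (a b : V) : geodesicInterval G a b = geodesicInterval G b a := by
  ext p
  simp only [mem_geodesicInterval, G.dist_comm (u := b), G.dist_comm (v := a), add_comm]

theorem right_mem_geodesicInterval : b ∈ geodesicInterval G a b := by
  simp [mem_geodesicInterval]

theorem geodesicInterval_subset_left (hG : G.Connected) (hc : c ∈ geodesicInterval G a b) :
    geodesicInterval G a c ⊆ geodesicInterval G a b := by
  intro p hp
  simp only [mem_geodesicInterval] at hc hp ⊢
  have := hG.dist_triangle (u := p) (v := c) (w := b)
  have := hG.dist_triangle (u := a) (v := p) (w := b)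
  lia

theorem geodesicInterval_subset_right (hG : G.Connected) (hc : c ∈ geodesicInterval G a b) :
    geodesicInterval G c b ⊆ geodesicInterval G a b := by
  rw [geodesicInterval_comm a] at hc ⊢
  rw [geodesicInterval_comm c]
  exact geodesicInterval_subset_left hG hc

theorem mem_geodesicInterval_of_mem_of_mem (hG : G.Connected) (hp : p ∈ geodesicInterval G a b)
    (hc : c ∈ geodesicInterval G a p) : p ∈ geodesicInterval G c b := by
  simp only [mem_geodesicInterval] at hp hc ⊢
  have := hG.dist_triangle (u := a) (v := c) (w := b)
  have := hG.dist_triangle (u := c) (v := p) (w := b)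
  lia

theorem geodesicInterval_subset_of_mem_of_mem (hG : G.Connected)
    (hp : p ∈ geodesicInterval G a b) (hx : x ∈ geodesicInterval G a p)
    (hy : y ∈ geodesicInterval G p b) : geodesicInterval G x y ⊆ geodesicInterval G a b :=
  have hpx : p ∈ geodesicInterval G x b := mem_geodesicInterval_of_mem_of_mem hG hp hx
  calc geodesicInterval G x y
      ⊆ geodesicInterval G x b :=
        geodesicInterval_subset_left hG (geodesicInterval_subset_right hG hpx hy)
    _ ⊆ geodesicInterval G a b :=
        geodesicInterval_subset_right hG (geodesicInterval_subset_left hG hp hx)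

theorem exists_mem_geodesicInterval_dist_eq (hG : G.Connected) {k : ℕ} (hk : k ≤ G.dist a b) :
    ∃ c ∈ geodesicInterval G a b, G.dist a c = k := by
  obtain ⟨q, hq⟩ := hG.exists_walk_length_eq_dist a b
  have htake := SimpleGraph.dist_le (q.take k)
  have hdrop := SimpleGraph.dist_le (q.drop k)
  have htri := hG.dist_triangle (u := a) (v := q.getVert k) (w := b)
  rw [SimpleGraph.Walk.take_length] at htake
  rw [SimpleGraph.Walk.drop_length] at hdrop
  exact ⟨q.getVert k, by simp only [mem_geodesicInterval]; lia, by lia⟩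

theorem exists_mem_geodesicInterval_forall_dist_le (G : SimpleGraph V) (a b z : V) :
    ∃ p ∈ geodesicInterval G a b, ∀ q ∈ geodesicInterval G a b, G.dist z p ≤ G.dist z q :=
  have hne : (geodesicInterval G a b).Nonempty := ⟨a, left_mem_geodesicInterval⟩
  ⟨_, Function.argminOn_mem (G.dist z) _ hne, fun _ => Function.argminOn_le (G.dist z) _⟩

theorem distThickening_mono (hST : S ⊆ T) : distThickening G r S ⊆ distThickening G r T :=
  fun _ ⟨y, hy, hxy⟩ => ⟨y, hST hy, hxy⟩

theorem mem_distThickening_add (hG : G.Connected) (hxy : G.dist x y ≤ r)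
    (hy : y ∈ distThickening G s S) : x ∈ distThickening G (r + s) S := by
  obtain ⟨w, hw, hyw⟩ := hy
  exact ⟨w, hw, hG.dist_triangle.trans (add_le_add hxy hyw)⟩

theorem distThickening_union :
    distThickening G r (S ∪ T) = distThickening G r S ∪ distThickening G r T := by
  ext x
  simp only [mem_distThickening, Set.mem_union, or_and_right, exists_or]

theorem distThickening_distThickening_subset (hG : G.Connected) :
    distThickening G r (distThickening G s S) ⊆ distThickening G (r + s) S :=
  fun _ ⟨_, hy, hxy⟩ => mem_distThickening_add hG hxy hy

theorem dist_add_dist_le_of_mem_distThickening (hG : G.Connected)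
    (hx : x ∈ distThickening G r (geodesicInterval G a b)) :
    G.dist a x + G.dist x b ≤ G.dist a b + 2 * r := by
  obtain ⟨p, hp, hxp⟩ := hx
  simp only [mem_geodesicInterval] at hp
  have := hG.dist_triangle (u := a) (v := p) (w := x)
  have := hG.dist_triangle (u := x) (v := p) (w := b)
  have := G.dist_comm (u := p) (v := x)
  lia

theorem exists_dist_le_one_of_subset_union {U : Set V} (hU : (G.induce U).Preconnected)
    (hUST : U ⊆ S ∪ T) (hS : (U ∩ S).Nonempty) (hT : (U ∩ T).Nonempty) :
    ∃ p ∈ U ∩ S, ∃ q ∈ U ∩ T, G.dist p q ≤ 1 := by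
  obtain ⟨u, huU, huS⟩ := hS
  obtain ⟨v, hvU, hvT⟩ := hT
  by_cases hvS : v ∈ S
  · exact ⟨v, ⟨hvU, hvS⟩, v, ⟨hvU, hvT⟩, by simp⟩
  · obtain ⟨walk⟩ := hU ⟨u, huU⟩ ⟨v, hvU⟩
    obtain ⟨d, -, hfst, hsnd⟩ := walk.exists_boundary_dart (Subtype.val ⁻¹' S) huS hvS
    have hadj : G.Adj d.fst d.snd := d.adj
    exact ⟨d.fst, ⟨d.fst.2, hfst⟩, d.snd, ⟨d.snd.2, (hUST d.snd.2).resolve_left hsnd⟩,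
      (SimpleGraph.dist_eq_one_iff_adj.2 hadj).le⟩

end Metric

/-- A family of vertex sets `A a b ∋ a, b` that is `N`-bounded over edges and whose triangles are
`N`-thin: candidates for neighborhoods of geodesics. Connectedness of the sets is not part of this
notion. -/
structure IsThinFamily {V : Type*} (G : SimpleGraph V) (A : V → V → Set V) (N : ℕ) : Prop where
  left_mem (a b : V) : a ∈ A a b
  right_mem (a b : V) : b ∈ A a b
  dist_le_of_adj {a b x y : V} : G.Adj a b → x ∈ A a b → y ∈ A a b → G.dist x y ≤ N
  subset_distThickening (a b c : V) : A a b ⊆ distThickening G N (A a c ∪ A c b)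

namespace IsThinFamily

variable {V : Type*} {G : SimpleGraph V} {A : V → V → Set V} {N R t : ℕ} {a b c p y z : V}

theorem flip (hA : IsThinFamily G A N) : IsThinFamily G (fun a b => A b a) N where
  left_mem a b := hA.right_mem b a
  right_mem a b := hA.left_mem b a
  dist_le_of_adj hab := hA.dist_le_of_adj hab.symm
  subset_distThickening a b c := Set.union_comm (A c a) (A b c) ▸ hA.subset_distThickening b a c

theorem dist_le_of_mem_self (hA : IsThinFamily G A N) (hG : G.Connected) (hz : z ∈ A a a) :
    G.dist z a ≤ 2 * N := by
  rcases eq_or_ne a z with rfl | hne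
  · simp
  obtain ⟨c, -, hc⟩ := exists_mem_geodesicInterval_dist_eq hG (hG.pos_dist_of_ne hne)
  have hadj : G.Adj a c := SimpleGraph.dist_eq_one_iff_adj.1 hc
  obtain ⟨y, hy, hzy⟩ := hA.subset_distThickening a a c hz
  have hya : G.dist y a ≤ N := hy.elim
    (fun hy => hA.dist_le_of_adj hadj hy (hA.left_mem a c))
    (fun hy => hA.dist_le_of_adj hadj.symm hy (hA.right_mem c a))
  have := hG.dist_triangle (u := z) (v := y) (w := a)
  lia

theorem subset_distThickening_of_dist_le_two_pow (hA : IsThinFamily G A N) (hG : G.Connected)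
    {m : ℕ} (hab : G.dist a b ≤ 2 ^ m) :
    A a b ⊆ distThickening G (N * (m + 2)) (geodesicInterval G a b) := by
  induction m generalizing a b with
  | zero =>
    intro z hz
    refine ⟨a, left_mem_geodesicInterval, ?_⟩
    rcases eq_or_ne a b with rfl | hne
    · have := hA.dist_le_of_mem_self hG hz
      lia
    · have hadj : G.Adj a b :=
        SimpleGraph.dist_eq_one_iff_adj.1 (le_antisymm hab (hG.pos_dist_of_ne hne))
      have := hA.dist_le_of_adj hadj hz (hA.left_mem a b)
      lia
  | succ m ih =>
    rw [pow_succ] at hab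
    obtain ⟨c, hc, hac⟩ :=
      exists_mem_geodesicInterval_dist_eq hG (Nat.div_le_self (G.dist a b) 2)
    have hcb : G.dist a c + G.dist c b = G.dist a b := hc
    have hleft := (ih (a := a) (b := c) (by lia)).trans
      (distThickening_mono (geodesicInterval_subset_left hG hc))
    have hright := (ih (a := c) (b := b) (by lia)).trans
      (distThickening_mono (geodesicInterval_subset_right hG hc))
    calc A a b
        ⊆ distThickening G N (A a c ∪ A c b) := hA.subset_distThickening a b c
      _ ⊆ distThickening G (N + N * (m + 2)) (geodesicInterval G a b) :=
        (distThickening_mono (Set.union_subset hleft hright)).trans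
          (distThickening_distThickening_subset hG)
      _ = distThickening G (N * (m + 1 + 2)) (geodesicInterval G a b) := by ring_nf

theorem exists_dist_le_two_mul (hA : IsThinFamily G A N) (hG : G.Connected) (a' b' : V)
    (hz : z ∈ A a b) : ∃ y ∈ A a a' ∪ A a' b' ∪ A b' b, G.dist z y ≤ 2 * N := by
  obtain ⟨y, hy | hy, hzy⟩ := hA.subset_distThickening a b a' hz
  · exact ⟨y, .inl (.inl hy), by lia⟩
  · obtain ⟨x, hx, hyx⟩ := hA.subset_distThickening a' b b' hy
    have := hG.dist_triangle (u := z) (v := y) (w := x)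
    exact ⟨x, hx.imp_left .inr, by lia⟩

-- If `c ≠ a`, then the points of `geodesicInterval G a c` are at distance at least `3 * t` from
-- `p`, while points `2 * N`-close to `z` are within `2 * N + t` of `p`.
theorem two_mul_lt_dist_of_mem_end (hA : IsThinFamily G A N) (hG : G.Connected)
    (hNR : 4 * N ≤ R) (hRt : R < t) (hza : t ≤ G.dist z a) (hzp : G.dist z p = t)
    (hc : c ∈ geodesicInterval G p a) (hpc : G.dist p c = min (3 * t) (G.dist p a))
    (hac : G.dist c a < G.dist p a → A a c ⊆ distThickening G R (geodesicInterval G a c))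
    (hy : y ∈ A a c) : 2 * N < G.dist z y := by
  by_contra! hzy
  rw [mem_geodesicInterval] at hc
  rcases eq_or_ne c a with rfl | hne
  · have := hA.dist_le_of_mem_self hG hy
    have := hG.dist_triangle (u := z) (v := y) (w := c)
    lia
  · have hca := hG.pos_dist_of_ne hne
    obtain ⟨q, hq, hzq⟩ := mem_distThickening_add hG hzy (hac (by lia) hy)
    rw [geodesicInterval_comm, mem_geodesicInterval] at hq
    have hpq : 3 * t ≤ G.dist p q := by
      have := hG.dist_triangle (u := p) (v := q) (w := a)
      lia
    have := hG.dist_triangle (u := p) (v := z) (w := q)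
    have := G.dist_comm (u := p) (v := z)
    lia

theorem subset_distThickening_geodesicInterval (hA : IsThinFamily G A N) (hG : G.Connected)
    (a b : V) : A a b ⊆ distThickening G (6 * N * (N + 2)) (geodesicInterval G a b) := by
  induction hn : G.dist a b using Nat.strong_induction_on generalizing a b with
  | _ n ih =>
  subst hn
  intro z hz
  by_contra hfar
  obtain ⟨p, hp, hmin⟩ := exists_mem_geodesicInterval_forall_dist_le G a b z
  have hRt : 6 * N * (N + 2) < G.dist z p := not_le.1 fun hle => hfar ⟨p, hp, hle⟩
  have hNR : 4 * N ≤ 6 * N * (N + 2) := by nlinarith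
  have hapb := mem_geodesicInterval.1 hp
  obtain ⟨a', ha', hpa'⟩ :=
    exists_mem_geodesicInterval_dist_eq hG (min_le_right (3 * G.dist z p) (G.dist p a))
  obtain ⟨b', hb', hpb'⟩ :=
    exists_mem_geodesicInterval_dist_eq hG (min_le_right (3 * G.dist z p) (G.dist p b))
  obtain ⟨y, (hy | hy) | hy, hzy⟩ := hA.exists_dist_le_two_mul hG a' b' hz
  · refine (hA.two_mul_lt_dist_of_mem_end hG hNR hRt (hmin a left_mem_geodesicInterval) rfl
      ha' hpa' (fun hlt => ih _ ?_ a a' rfl) hy).not_ge hzy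
    rw [G.dist_comm (u := a') (v := a), G.dist_comm (u := p) (v := a)] at hlt
    lia
  · have hsub : geodesicInterval G a' b' ⊆ geodesicInterval G a b :=
      geodesicInterval_subset_of_mem_of_mem hG hp (geodesicInterval_comm p a ▸ ha') hb'
    have hlen : G.dist a' b' ≤ 6 * G.dist z p := by
      have := hG.dist_triangle (u := a') (v := p) (w := b')
      have := G.dist_comm (u := a') (v := p)
      lia
    have hshort := hlen.trans (Nat.le_pow_clog one_lt_two _)
    obtain ⟨q, hq, hzq⟩ := mem_distThickening_add hG hzy
      (hA.subset_distThickening_of_dist_le_two_pow hG hshort hy)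
    have := hmin q (hsub hq)
    have := mul_clog_add_four_lt hRt
    lia
  · refine (hA.flip.two_mul_lt_dist_of_mem_end hG hNR hRt
      (hmin b right_mem_geodesicInterval) rfl hb' hpb' (fun hlt => ?_) hy).not_ge hzy
    rw [geodesicInterval_comm]
    exact ih _ (by lia) b' b rfl

theorem subset_union_distThickening_geodesicInterval (hA : IsThinFamily G A N)
    (hG : G.Connected) (hR : ∀ a b, A a b ⊆ distThickening G R (geodesicInterval G a b))
    (a b c : V) : A a b ⊆ distThickening G (N + R) (geodesicInterval G a c) ∪
      distThickening G (N + R) (geodesicInterval G c b) := by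
  rw [← distThickening_union]
  refine (hA.subset_distThickening a b c).trans <|
    (distThickening_mono ?_).trans (distThickening_distThickening_subset hG)
  rw [distThickening_union]
  exact Set.union_subset_union (hR a c) (hR c b)

theorem exists_mem_distThickening_inter (hA : IsThinFamily G A N) (hG : G.Connected)
    (hconn : ∀ a b, (G.induce (A a b)).Preconnected)
    (hR : ∀ a b, A a b ⊆ distThickening G R (geodesicInterval G a b)) (a b c : V) :
    ∃ p ∈ A a b, p ∈ distThickening G (N + R) (geodesicInterval G a c) ∩
      distThickening G (1 + (N + R)) (geodesicInterval G c b) := by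
  obtain ⟨p, ⟨hp, hpac⟩, q, ⟨-, hqcb⟩, hpq⟩ := exists_dist_le_one_of_subset_union (hconn a b)
    (hA.subset_union_distThickening_geodesicInterval hG hR a b c)
    ⟨a, hA.left_mem a b, a, left_mem_geodesicInterval, by simp⟩
    ⟨b, hA.right_mem a b, b, right_mem_geodesicInterval, by simp⟩
  exact ⟨p, hp, hpac, mem_distThickening_add hG hpq hqcb⟩

theorem gromovHyperbolicGraph_of_subset_distThickening (hA : IsThinFamily G A N)
    (hG : G.Connected) (hconn : ∀ a b, (G.induce (A a b)).Preconnected)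
    (hR : ∀ a b, A a b ⊆ distThickening G R (geodesicInterval G a b)) :
    GromovHyperbolicGraph G (4 * (N + R) + 2 : ℕ) := by
  refine ⟨Nat.cast_nonneg _, fun x y z w => ?_⟩
  obtain ⟨p, hp, hxw, hwz⟩ := hA.exists_mem_distThickening_inter hG hconn hR x z w
  replace hxw := dist_add_dist_le_of_mem_distThickening hG hxw
  replace hwz := dist_add_dist_le_of_mem_distThickening hG hwz
  have hxpz := hG.dist_triangle (u := x) (v := p) (w := z)
  have hypw := hG.dist_triangle (u := y) (v := p) (w := w)
  rw [← max_add_add_right, le_max_iff]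
  norm_cast
  rw [G.dist_comm (u := z) (v := w)]
  rw [G.dist_comm (u := w) (v := p)] at hwz
  refine (hA.subset_union_distThickening_geodesicInterval hG hR x z y hp).imp
    (fun hxy => ?_) (fun hyz => ?_)
  · have := dist_add_dist_le_of_mem_distThickening hG hxy
    rw [G.dist_comm (u := p) (v := y)] at this
    lia
  · have := dist_add_dist_le_of_mem_distThickening hG hyz
    lia

theorem gromovHyperbolicGraph (hA : IsThinFamily G A N) (hG : G.Connected)
    (hconn : ∀ a b, (G.induce (A a b)).Preconnected) :
    GromovHyperbolicGraph G (4 * (N + 6 * N * (N + 2)) + 2 : ℕ) :=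
  hA.gromovHyperbolicGraph_of_subset_distThickening hG hconn
    (hA.subset_distThickening_geodesicInterval hG)

end IsThinFamily

theorem stmt_0_general {V : Type*} {G : SimpleGraph V} (hG : G.Connected) {A : V → V → Set V}
    {D : ℝ} (hleft : ∀ a b, a ∈ A a b) (hright : ∀ a b, b ∈ A a b)
    (hconn : ∀ a b, (G.induce (A a b)).Preconnected)
    (hadj : ∀ a b, G.Adj a b → ∀ x ∈ A a b, ∀ y ∈ A a b, (G.dist x y : ℝ) ≤ D)
    (hthin : ∀ a b c, ∀ x ∈ A a b, ∃ y, (y ∈ A a c ∨ y ∈ A c b) ∧ (G.dist x y : ℝ) ≤ D) :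
    GromovHyperbolicGraph G (24 * (⌈D⌉₊ : ℝ) ^ 2 + 52 * ⌈D⌉₊ + 2) := by
  have hceil {n : ℕ} (hn : (n : ℝ) ≤ D) : n ≤ ⌈D⌉₊ := Nat.cast_le.1 (hn.trans (Nat.le_ceil D))
  have hA : IsThinFamily G A ⌈D⌉₊ :=
    { left_mem := hleft
      right_mem := hright
      dist_le_of_adj := fun hab hx hy => hceil (hadj _ _ hab _ hx _ hy)
      subset_distThickening := fun a b c x hx =>
        let ⟨y, hy, hxy⟩ := hthin a b c x hx
        ⟨y, hy, hceil hxy⟩ }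
  convert hA.gromovHyperbolicGraph hG hconn using 1
  push_cast
  ring

/-- The Masur–Schleimer/Bowditch hyperbolicity criterion: if a connected graph `X` carries,
for each pair of vertices `a, b`, a connected subgraph `A a b` containing `a` and `b`, and
there is `D > 0` such that `A a b` has diameter at most `D` whenever `a` and `b` are adjacent,
and `A a b` lies in the `D`-neighborhood of `A a c ∪ A c b` for all `a, b, c`, then `X` is
Gromov hyperbolic with constant depending only on `D`. -/
theorem stmt_0 :
    ∃ f : ℝ → ℝ, ∀ (V : Type) (G : SimpleGraph V), G.Connected →
      ∀ (A : V → V → Set V) (D : ℝ), 0 < D →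
      (∀ a b : V, a ∈ A a b) →
      (∀ a b : V, b ∈ A a b) →
      (∀ a b : V, (SimpleGraph.induce (A a b) G).Connected) →
      (∀ a b : V, G.Adj a b → ∀ x ∈ A a b, ∀ y ∈ A a b, (G.dist x y : ℝ) ≤ D) →
      (∀ a b c : V, ∀ x ∈ A a b,
        ∃ y, (y ∈ A a c ∨ y ∈ A c b) ∧ (G.dist x y : ℝ) ≤ D) →
      GromovHyperbolicGraph G (f D) :=
  ⟨fun D => 24 * (⌈D⌉₊ : ℝ) ^ 2 + 52 * ⌈D⌉₊ + 2, fun _ _ hG _ _ _ hleft hright hconn =>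
    stmt_0_general hG hleft hright fun a b => (hconn a b).preconnected⟩
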